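/- Assume the potential outcomes setup for Y_0 (continuity and common support of the conditional cdfs of Y_0 given X = x', and p_1 = P(X = 1) ∈ (0,1)), suppose X is c-dependent with Y_0 for c ∈ [0,1], suppose E(|Y| | X = x) < ∞ for x ∈ {0,1}, and suppose Y_0 and Y_1 are integrable. Let E̲_0 = ∫_0^1 Q̲^c_0(τ) dτ and Ē_0 = ∫_0^1 Q̄^c_0(τ) dτ. Then the average effect of treatment on the treated, ATT = E(Y_1 − Y_0 | X = 1), satisfies E(Y | X=1) − (Ē_0 − p_0·E(Y | X=0))/p_1 ≤ ATT ≤ E(Y | X=1) − (E̲_0 − p_0·E(Y | X=0))/p_1, where p_0 = 1 − p_1 (endpoints possibly ±∞). -/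

import Mathlib

open MeasureTheory Set ENNReal

noncomputable section

/-- `X` is `c`-dependent with the real random variable `V`. -/
def CDep {Ω : Type*} [MeasurableSpace Ω] (P : Measure Ω) (X : Ω → ℕ) (V : Ω → ℝ)
    (c : ℝ) : Prop :=
  ∃ g : ℝ → ℝ, Measurable g ∧ (∀ v, 0 ≤ g v ∧ g v ≤ 1) ∧
    (∀ A : Set ℝ, MeasurableSet A →
      (P ({ω | X ω = 1} ∩ V ⁻¹' A)).toReal = ∫ v in A, g v ∂(Measure.map V P)) ∧
    (∀ᵐ v ∂(Measure.map V P), |g v - (P {ω | X ω = 1}).toReal| ≤ c)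

/-- `P(X = x)`. -/
def px {Ω : Type*} [MeasurableSpace Ω] (P : Measure Ω) (X : Ω → ℕ) (x : ℕ) : ℝ :=
  (P {ω | X ω = x}).toReal

/-- The conditional cdf `y ↦ P(V ≤ y ∣ X = x)`. -/
def condCDF' {Ω : Type*} [MeasurableSpace Ω] (P : Measure Ω) (X : Ω → ℕ) (V : Ω → ℝ)
    (x : ℕ) (y : ℝ) : ℝ :=
  (P ({ω | V ω ≤ y} ∩ {ω | X ω = x})).toReal / (P {ω | X ω = x}).toReal

/-- The (extended-real-valued) quantile function of a cdf `G`, equal to the left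
inverse of `G` on `(0,1)` and extended by the support endpoints `lo` at `0` and
`hi` at `1`. -/
def Qgen (G : ℝ → ℝ) (lo hi : EReal) (τ : ℝ) : EReal :=
  if τ ≤ 0 then lo else if 1 ≤ τ then hi
  else ((sInf {y : ℝ | τ ≤ G y} : ℝ) : EReal)

/-- The clipped quantile level used in the upper quantile bound. -/
def qUp (p c τ : ℝ) : ℝ := min (min (τ + c / p * min τ (1 - τ)) (τ / p)) 1

/-- The clipped quantile level used in the lower quantile bound. -/
def qLo (p c τ : ℝ) : ℝ := max (max (τ - c / p * min τ (1 - τ)) ((τ - 1) / p + 1)) 0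

/-- The `τ`-th quantile of the random variable `V`. -/
def quant {Ω : Type*} [MeasurableSpace Ω] (P : Measure Ω) (V : Ω → ℝ) (τ : ℝ) : ℝ :=
  sInf {z : ℝ | τ ≤ (P {ω | V ω ≤ z}).toReal}

/-- The truncation of an extended real to `ℝ≥0∞`. -/
def toENN (a : EReal) : ℝ≥0∞ := if a = ⊤ then ⊤ else ENNReal.ofReal a.toReal

/-- The (possibly infinite) signed integral `∫_0^1 f(τ) dτ` of an
extended-real-valued function, as an extended real. -/
def eint01 (f : ℝ → EReal) : EReal :=
  ((∫⁻ τ in Set.Ioo (0:ℝ) 1, toENN (f τ) : ℝ≥0∞) : EReal) -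
    ((∫⁻ τ in Set.Ioo (0:ℝ) 1, toENN (-(f τ)) : ℝ≥0∞) : EReal)

/-! `c`-dependence bounds the conditional law of `Y₀` given `X = 0` by its unconditional law:
`P(Y₀ ∈ A ∣ X = 0) ≤ qUp p₀ c (P(Y₀ ∈ A))` for every Borel set `A`. The sets `A = (-∞, y]` and
`A = (y, ∞)` give two-sided bounds on the conditional cdf; since `qUp` is concave with value `1`
at `1`, it increases strictly until it reaches `1`, so these bounds can be inverted into bounds on
the quantile function of `Y₀`. That function has, under the uniform law on `(0, 1)`, the
distribution of `Y₀`, so integration yields bounds on `E Y₀`, and the ATT is an affine decreasing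
function of `E Y₀` with observable coefficients. -/

section

open ProbabilityTheory Filter Topology

section QuantileLevel

variable {p c σ τ : ℝ}

lemma qUp_le_one : qUp p c τ ≤ 1 := min_le_right _ _

lemma qUp_one (hp : 0 < p) (hp' : p ≤ 1) : qUp p c 1 = 1 := by
  simp [qUp, (one_le_inv₀ hp).2 hp']

lemma qUp_pos (hp : 0 < p) (hc : 0 ≤ c) (hτ : τ ∈ Ioo (0 : ℝ) 1) : 0 < qUp p c τ := by
  obtain ⟨hτ0, hτ1⟩ := hτ
  have hmin : 0 < min τ (1 - τ) := lt_min hτ0 (sub_pos.2 hτ1)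
  have hterm : 0 ≤ c / p * min τ (1 - τ) := mul_nonneg (div_nonneg hc hp.le) hmin.le
  exact lt_min (lt_min (by linarith) (div_pos hτ0 hp)) one_pos

lemma concaveOn_qUp (hp : 0 ≤ p) (hc : 0 ≤ c) : ConcaveOn ℝ univ (qUp p c) := by
  have hid : ConcaveOn ℝ univ (fun τ : ℝ => τ) := concaveOn_id convex_univ
  have hdiv : ConcaveOn ℝ univ (fun τ : ℝ => τ / p) := by
    simpa [div_eq_inv_mul] using hid.smul (inv_nonneg.2 hp)
  have hrefl : ConcaveOn ℝ univ (fun τ : ℝ => 1 - τ) :=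
    (concaveOn_const 1 convex_univ).sub (convexOn_id convex_univ)
  exact ((hid.add ((hid.inf hrefl).smul (div_nonneg hc hp))).inf hdiv).inf
    (concaveOn_const 1 convex_univ)

lemma qUp_lt_qUp (hp : 0 < p) (hp' : p ≤ 1) (hc : 0 ≤ c) (hστ : σ < τ) (hτ : τ ≤ 1)
    (hlt : qUp p c τ < 1) : qUp p c σ < qUp p c τ := by
  have hτ1 : τ < 1 := by
    refine hτ.lt_of_ne ?_
    rintro rfl
    exact hlt.ne (qUp_one hp hp')
  refine (concaveOn_qUp hp.le hc).left_lt_of_lt_right (mem_univ σ) (mem_univ 1) ?_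
    (hlt.trans_eq (qUp_one hp hp').symm)
  rw [openSegment_eq_Ioo (hστ.trans hτ1)]
  exact ⟨hστ, hτ1⟩

lemma monotoneOn_qUp (hp : 0 < p) (hp' : p ≤ 1) (hc : 0 ≤ c) : MonotoneOn (qUp p c) (Iic 1) := by
  intro σ _ τ hτ hστ
  rcases hστ.eq_or_lt with rfl | hστ
  · rfl
  rcases (qUp_le_one (p := p) (c := c) (τ := τ)).eq_or_lt with h | h
  · exact h ▸ qUp_le_one
  · exact (qUp_lt_qUp hp hp' hc hστ hτ h).le

lemma qLo_eq_one_sub_qUp : qLo p c τ = 1 - qUp p c (1 - τ) := by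
  have hslope (m : ℝ) : 1 - (1 - τ + c / p * m) = τ - c / p * m := by ring
  have hdiv : 1 - (1 - τ) / p = (τ - 1) / p + 1 := by ring
  rw [qLo, qUp, sub_sub_self, min_comm (1 - τ) τ, ← max_sub_sub_left, ← max_sub_sub_left,
    hslope, hdiv, sub_self]

lemma monotoneOn_qLo (hp : 0 < p) (hp' : p ≤ 1) (hc : 0 ≤ c) :
    MonotoneOn (qLo p c) (Ici 0) := by
  intro σ hσ τ hτ hστ
  rw [qLo_eq_one_sub_qUp, qLo_eq_one_sub_qUp]
  exact sub_le_sub_left (monotoneOn_qUp hp hp' hc (mem_Iic.2 (sub_le_self 1 hτ))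
    (mem_Iic.2 (sub_le_self 1 hσ)) (sub_le_sub_left hστ 1)) 1

end QuantileLevel

section Quantile

lemma isLeast_sInf_le_cdf (μ : Measure ℝ) {τ : ℝ} (hτ : τ ∈ Ioo (0 : ℝ) 1) :
    IsLeast {y | τ ≤ cdf μ y} (sInf {y | τ ≤ cdf μ y}) := by
  have hne : {y | τ ≤ cdf μ y}.Nonempty :=
    ((tendsto_cdf_atTop μ).eventually_const_le hτ.2).exists
  have hbdd : BddBelow {y | τ ≤ cdf μ y} := by
    obtain ⟨w, hw⟩ := ((tendsto_cdf_atBot μ).eventually_lt_const hτ.1).exists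
    exact ⟨w, fun z hz => ((monotone_cdf μ).reflect_lt (hw.trans_le hz)).le⟩
  refine ⟨?_, fun y hy => csInf_le hbdd hy⟩
  have hright : Tendsto (cdf μ) (𝓝[>] sInf {y | τ ≤ cdf μ y})
      (𝓝 (cdf μ (sInf {y | τ ≤ cdf μ y}))) :=
    ((cdf μ).right_continuous _).mono_left (nhdsWithin_mono _ Ioi_subset_Ici_self)
  refine ge_of_tendsto hright (eventually_mem_nhdsWithin.mono fun z hz => ?_)
  obtain ⟨y, hy, hyz⟩ := exists_lt_of_csInf_lt hne hz
  exact hy.trans (monotone_cdf μ hyz.le)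

variable {Ω : Type*} [MeasurableSpace Ω] {P : Measure Ω} [IsProbabilityMeasure P] {V : Ω → ℝ}

lemma cdf_map_eq_real (hV : AEMeasurable V P) (y : ℝ) :
    cdf (P.map V) y = P.real {ω | V ω ≤ y} := by
  have := Measure.isProbabilityMeasure_map hV
  rw [cdf_eq_real, map_measureReal_apply_of_aemeasurable hV measurableSet_Iic]
  rfl

lemma quant_le_iff (hV : AEMeasurable V P) {τ : ℝ} (hτ : τ ∈ Ioo (0 : ℝ) 1) {y : ℝ} :
    quant P V τ ≤ y ↔ τ ≤ P.real {ω | V ω ≤ y} := by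
  have hquant : quant P V τ = sInf {z | τ ≤ cdf (P.map V) z} := by
    simp only [cdf_map_eq_real hV, quant, measureReal_def]
  obtain ⟨hmem, hlower⟩ := isLeast_sInf_le_cdf (P.map V) hτ
  rw [hquant, ← cdf_map_eq_real hV]
  exact ⟨fun h => hmem.trans (monotone_cdf _ h), fun h => hlower h⟩

lemma identDistrib_quant (hV : AEMeasurable V P) :
    IdentDistrib (quant P V) V (volume.restrict (Ioo 0 1)) P := by
  have hmono : MonotoneOn (quant P V) (Ioo 0 1) := fun σ hσ τ hτ hστ =>
    (quant_le_iff hV hσ).2 (hστ.trans ((quant_le_iff hV hτ).1 le_rfl))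
  have hmeas := aemeasurable_restrict_of_monotoneOn (μ := volume) measurableSet_Ioo hmono
  have : IsFiniteMeasure (volume.restrict (Ioo (0 : ℝ) 1)) := ⟨by simp⟩
  refine ⟨hmeas, hV, Measure.ext_of_Iic _ _ fun y => ?_⟩
  rw [Measure.map_apply_of_aemeasurable hmeas measurableSet_Iic,
    Measure.map_apply_of_aemeasurable hV measurableSet_Iic,
    Measure.restrict_apply' measurableSet_Ioo]
  calc volume (quant P V ⁻¹' Iic y ∩ Ioo 0 1)
      = volume (Ioo 0 1 ∩ Iic (P.real {ω | V ω ≤ y})) := by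
        congr 1
        ext τ
        rw [inter_comm]
        exact and_congr_right fun hτ => quant_le_iff hV hτ
    _ = volume (Ioo 0 1 ∩ Iio (P.real {ω | V ω ≤ y})) :=
        measure_congr ((ae_eq_refl _).inter Iio_ae_eq_Iic.symm)
    _ = P (V ⁻¹' Iic y) := by
        rw [Ioo_inter_Iio, min_eq_right measureReal_le_one, Real.volume_Ioo, sub_zero,
          ofReal_measureReal]
        rfl

end Quantile

section SignedIntegral

lemma toENN_coe (r : ℝ) : toENN r = ENNReal.ofReal r := by
  simp [toENN]

lemma toENN_mono : Monotone toENN := by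
  intro a b hab
  by_cases hb : b = ⊤
  · simp [toENN, hb]
  have ha : a ≠ ⊤ := (hab.trans_lt (Ne.lt_top hb)).ne
  by_cases ha' : a = ⊥
  · simp [toENN, ha']
  · simpa only [toENN, ha, hb, if_false] using
      ENNReal.ofReal_le_ofReal (EReal.toReal_le_toReal hab ha' hb)

lemma eint01_mono_ae {f g : ℝ → EReal} (h : ∀ᵐ τ ∂volume.restrict (Ioo (0 : ℝ) 1), f τ ≤ g τ) :
    eint01 f ≤ eint01 g := by
  refine EReal.sub_le_sub (EReal.coe_ennreal_le_coe_ennreal_iff.2 ?_)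
    (EReal.coe_ennreal_le_coe_ennreal_iff.2 ?_)
  · exact lintegral_mono_ae (h.mono fun τ hτ => toENN_mono hτ)
  · exact lintegral_mono_ae (h.mono fun τ hτ => toENN_mono (EReal.neg_le_neg_iff.2 hτ))

lemma eint01_coe {f : ℝ → ℝ} (hf : IntegrableOn f (Ioo 0 1)) :
    eint01 (fun τ => (f τ : EReal)) = ((∫ τ in Ioo (0 : ℝ) 1, f τ : ℝ) : EReal) := by
  simp only [eint01, ← EReal.coe_neg, toENN_coe]
  have hpos : ∫⁻ τ in Ioo (0 : ℝ) 1, ENNReal.ofReal (f τ) ≠ ⊤ := hf.lintegral_lt_top.ne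
  have hneg : ∫⁻ τ in Ioo (0 : ℝ) 1, ENNReal.ofReal (-f τ) ≠ ⊤ := hf.neg.lintegral_lt_top.ne
  rw [integral_eq_lintegral_pos_part_sub_lintegral_neg_part hf, EReal.coe_sub,
    EReal.coe_ennreal_toReal hpos, EReal.coe_ennreal_toReal hneg]

lemma eint01_quant {Ω : Type*} [MeasurableSpace Ω] {P : Measure Ω} [IsProbabilityMeasure P]
    {V : Ω → ℝ} (hV : Integrable V P) :
    eint01 (fun τ => (quant P V τ : EReal)) = ((∫ ω, V ω ∂P : ℝ) : EReal) := by
  have hident := identDistrib_quant hV.aemeasurable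
  rw [eint01_coe (hident.integrable_iff.2 hV), hident.integral_eq]

end SignedIntegral

section Conditioning

lemma setOf_eq_zero_eq_compl {Ω : Type*} {X : Ω → ℕ} (hX01 : ∀ ω, X ω ≤ 1) :
    {ω | X ω = 0} = {ω | X ω = 1}ᶜ := by
  ext ω
  have := hX01 ω
  simp only [mem_ofPred_eq, mem_compl_iff]
  omega

lemma measurableSet_setOf_eq {Ω α : Type*} [MeasurableSpace Ω] [MeasurableSpace α]
    [MeasurableSingletonClass α] {X : Ω → α} (hX : Measurable X) (x : α) :
    MeasurableSet {ω | X ω = x} :=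
  hX (measurableSet_singleton x)

variable {Ω : Type*} [MeasurableSpace Ω] {P : Measure Ω} {X : Ω → ℕ} {V W : Ω → ℝ}

lemma px_zero_eq_one_sub [IsProbabilityMeasure P] (hX : Measurable X) (hX01 : ∀ ω, X ω ≤ 1) :
    px P X 0 = 1 - px P X 1 := by
  rw [px, setOf_eq_zero_eq_compl hX01]
  exact probReal_compl_eq_one_sub (measurableSet_setOf_eq hX 1)

lemma cond_real_eq_div (hX : Measurable X) (x : ℕ) (s : Set Ω) :
    P[|{ω | X ω = x}].real s = P.real ({ω | X ω = x} ∩ s) / px P X x := by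
  rw [measureReal_def, cond_apply (measurableSet_setOf_eq hX x), ENNReal.toReal_mul,
    ENNReal.toReal_inv, ← div_eq_inv_mul]
  rfl

lemma isProbabilityMeasure_cond_of_px_pos [IsFiniteMeasure P] {x : ℕ} (hpx : 0 < px P X x) :
    IsProbabilityMeasure P[|{ω | X ω = x}] :=
  cond_isProbabilityMeasure (ENNReal.toReal_pos_iff.1 hpx).1.ne'

lemma condCDF'_eq_cond_real (hX : Measurable X) (x : ℕ) (y : ℝ) :
    condCDF' P X V x y = P[|{ω | X ω = x}].real {ω | V ω ≤ y} := by
  rw [cond_real_eq_div hX, inter_comm]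
  rfl

lemma condCDF'_congr {x : ℕ} (h : ∀ ω, X ω = x → V ω = W ω) :
    condCDF' P X V x = condCDF' P X W x := by
  have hset (y : ℝ) : {ω | V ω ≤ y} ∩ {ω | X ω = x} = {ω | W ω ≤ y} ∩ {ω | X ω = x} := by
    ext ω
    exact and_congr_left fun hω => by simp only [mem_ofPred_eq, h ω hω]
  funext y
  rw [condCDF', condCDF', hset]

lemma real_setOf_le_eq_add_condCDF' [IsFiniteMeasure P] (hX : Measurable X)
    (hX01 : ∀ ω, X ω ≤ 1) (y : ℝ) :
    P.real {ω | V ω ≤ y} = px P X 0 * condCDF' P X V 0 y + px P X 1 * condCDF' P X V 1 y := by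
  have hinter (x : ℕ) :
      px P X x * condCDF' P X V x y = P.real ({ω | V ω ≤ y} ∩ {ω | X ω = x}) :=
    mul_div_cancel_of_imp' fun h => measureReal_mono_null inter_subset_right h
  rw [hinter, hinter, setOf_eq_zero_eq_compl hX01, ← sdiff_eq, add_comm,
    measureReal_inter_add_sdiff (measurableSet_setOf_eq hX 1)]

lemma Qgen_condCDF' (hX : Measurable X) {x : ℕ} {lo hi : EReal} {τ : ℝ}
    (hτ : τ ∈ Ioo (0 : ℝ) 1) :
    Qgen (condCDF' P X V x) lo hi τ = quant P[|{ω | X ω = x}] V τ := by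
  simp only [Qgen, hτ.1.not_ge, hτ.2.not_ge, if_false, quant, condCDF'_eq_cond_real hX,
    measureReal_def]

end Conditioning

section Support

variable {Ω : Type*} [MeasurableSpace Ω] {P : Measure Ω} {X : Ω → ℕ} {V : Ω → ℝ}

lemma ae_coe_ge_of_real_setOf_le_eq_zero [IsFiniteMeasure P] {lo : EReal}
    (h : ∀ y : ℝ, (y : EReal) < lo → P.real {ω | V ω ≤ y} = 0) : ∀ᵐ ω ∂P, lo ≤ V ω := by
  have hrat : ∀ᵐ ω ∂P, ∀ q : ℚ, ((q : ℝ) : EReal) < lo → (q : ℝ) < V ω := by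
    refine ae_all_iff.2 fun q => ?_
    by_cases hq : ((q : ℝ) : EReal) < lo
    · simpa [hq, ae_iff] using (measureReal_eq_zero_iff).1 (h q hq)
    · simp [hq]
  filter_upwards [hrat] with ω hω
  by_contra! hlt
  obtain ⟨q, hVq, hq⟩ := EReal.lt_iff_exists_rat_btwn.1 hlt
  exact (EReal.coe_lt_coe_iff.1 hVq).not_gt (hω q hq)

lemma ae_coe_le_of_real_setOf_le_eq_one [IsProbabilityMeasure P] (hV : AEMeasurable V P)
    {hi : EReal} (h : ∀ y : ℝ, hi < y → P.real {ω | V ω ≤ y} = 1) :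
    ∀ᵐ ω ∂P, (V ω : EReal) ≤ hi := by
  have hrat : ∀ᵐ ω ∂P, ∀ q : ℚ, hi < ((q : ℝ) : EReal) → V ω ≤ (q : ℝ) := by
    refine ae_all_iff.2 fun q => ?_
    by_cases hq : hi < ((q : ℝ) : EReal)
    · have hset : NullMeasurableSet {ω | V ω ≤ q} P :=
        hV.nullMeasurableSet_preimage measurableSet_Iic
      filter_upwards [(mem_ae_iff_prob_eq_one₀ hset).2 ((ENNReal.toReal_eq_one_iff _).1 (h q hq))]
        with ω hω _ using hω
    · simp [hq]
  filter_upwards [hrat] with ω hω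
  by_contra! hlt
  obtain ⟨q, hq, hqV⟩ := EReal.lt_iff_exists_rat_btwn.1 hlt
  exact (EReal.coe_lt_coe_iff.1 hqV).not_ge (hω q hq)

lemma ae_mem_Icc_of_condCDF' [IsProbabilityMeasure P] (hX : Measurable X)
    (hX01 : ∀ ω, X ω ≤ 1) (hV : AEMeasurable V P) {lo hi : EReal}
    (h : ∀ x ≤ 1, ∀ y : ℝ, ((y : EReal) ≤ lo → condCDF' P X V x y = 0) ∧
      (hi ≤ (y : EReal) → condCDF' P X V x y = 1)) :
    ∀ᵐ ω ∂P, (V ω : EReal) ∈ Icc lo hi := by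
  have hlo : ∀ᵐ ω ∂P, lo ≤ V ω := ae_coe_ge_of_real_setOf_le_eq_zero fun y hy => by
    rw [real_setOf_le_eq_add_condCDF' hX hX01, (h 0 zero_le_one y).1 hy.le, (h 1 le_rfl y).1 hy.le]
    ring
  have hhi : ∀ᵐ ω ∂P, (V ω : EReal) ≤ hi := ae_coe_le_of_real_setOf_le_eq_one hV fun y hy => by
    rw [real_setOf_le_eq_add_condCDF' hX hX01, (h 0 zero_le_one y).2 hy.le, (h 1 le_rfl y).2 hy.le,
      px_zero_eq_one_sub hX hX01]
    ring
  exact hlo.and hhi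

end Support

namespace CDep

variable {Ω : Type*} [MeasurableSpace Ω] {P : Measure Ω} {X : Ω → ℕ} {V : Ω → ℝ} {c : ℝ}

lemma nonneg [IsProbabilityMeasure P] (h : CDep P X V c) (hV : AEMeasurable V P) : 0 ≤ c := by
  have := Measure.isProbabilityMeasure_map hV
  obtain ⟨g, -, -, -, hgc⟩ := h
  obtain ⟨v, hv⟩ := hgc.exists
  exact (abs_nonneg _).trans hv

lemma abs_real_inter_sub_le [IsFiniteMeasure P] (h : CDep P X V c) (hV : AEMeasurable V P)
    {A : Set ℝ} (hA : MeasurableSet A) :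
    |P.real ({ω | X ω = 1} ∩ V ⁻¹' A) - px P X 1 * P.real (V ⁻¹' A)| ≤ c * P.real (V ⁻¹' A) := by
  obtain ⟨g, hg, hg01, hgA, hgc⟩ := h
  have hgint : Integrable g (P.map V) := by
    refine .of_bound hg.aestronglyMeasurable 1 (.of_forall fun v => ?_)
    rw [Real.norm_of_nonneg (hg01 v).1]
    exact (hg01 v).2
  have hsub : P.real ({ω | X ω = 1} ∩ V ⁻¹' A) - px P X 1 * P.real (V ⁻¹' A) =
      ∫ v in A, (g v - px P X 1) ∂(P.map V) := by
    rw [integral_sub hgint.integrableOn (integrable_const _), setIntegral_const, smul_eq_mul,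
      ← hgA A hA, map_measureReal_apply_of_aemeasurable hV hA, mul_comm]
    rfl
  rw [hsub, ← map_measureReal_apply_of_aemeasurable hV hA, ← Real.norm_eq_abs]
  exact norm_setIntegral_le_of_norm_le_const_ae' (measure_lt_top _ A) (hgc.mono fun v hv _ => hv)

variable [IsProbabilityMeasure P]

lemma abs_real_inter_sub_le_min (h : CDep P X V c) (hV : AEMeasurable V P) {A : Set ℝ}
    (hA : MeasurableSet A) :
    |P.real ({ω | X ω = 1} ∩ V ⁻¹' A) - px P X 1 * P.real (V ⁻¹' A)| ≤
      c * min (P.real (V ⁻¹' A)) (1 - P.real (V ⁻¹' A)) := by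
  have hVA : NullMeasurableSet (V ⁻¹' A) P := hV.nullMeasurableSet_preimage hA
  have hcompl : P.real (V ⁻¹' Aᶜ) = 1 - P.real (V ⁻¹' A) := probReal_compl_eq_one_sub₀ hVA
  have hinter : P.real ({ω | X ω = 1} ∩ V ⁻¹' Aᶜ) =
      px P X 1 - P.real ({ω | X ω = 1} ∩ V ⁻¹' A) :=
    eq_sub_of_add_eq' (measureReal_inter_add_sdiff₀ hVA)
  have hneg : px P X 1 - P.real ({ω | X ω = 1} ∩ V ⁻¹' A) - px P X 1 * (1 - P.real (V ⁻¹' A)) =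
      -(P.real ({ω | X ω = 1} ∩ V ⁻¹' A) - px P X 1 * P.real (V ⁻¹' A)) := by
    ring
  -- The deviation on `Aᶜ` is the negative of that on `A`, so it is bounded by both probabilities.
  have hAc := h.abs_real_inter_sub_le hV hA.compl
  rw [hcompl, hinter, hneg, abs_neg] at hAc
  rw [mul_min_of_nonneg _ _ (h.nonneg hV)]
  exact le_min (h.abs_real_inter_sub_le hV hA) hAc

lemma cond_real_preimage_le_qUp (h : CDep P X V c) (hV : AEMeasurable V P) (hX : Measurable X)
    (hX01 : ∀ ω, X ω ≤ 1) (hp0 : 0 < px P X 0) {A : Set ℝ} (hA : MeasurableSet A) :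
    P[|{ω | X ω = 0}].real (V ⁻¹' A) ≤ qUp (px P X 0) c (P.real (V ⁻¹' A)) := by
  have hsplit : P.real ({ω | X ω = 1} ∩ V ⁻¹' A) + P.real ({ω | X ω = 0} ∩ V ⁻¹' A) =
      P.real (V ⁻¹' A) := by
    rw [setOf_eq_zero_eq_compl hX01, inter_comm, inter_comm _ᶜ, ← sdiff_eq,
      measureReal_inter_add_sdiff (measurableSet_setOf_eq hX 1)]
  refine le_min (le_min ?_ ?_) measureReal_le_one <;> rw [cond_real_eq_div hX]
  · rw [div_le_iff₀ hp0, add_mul, mul_right_comm, div_mul_cancel₀ _ hp0.ne']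
    have hp1 := px_zero_eq_one_sub hX hX01 (P := P)
    linear_combination (abs_le.1 (h.abs_real_inter_sub_le_min hV hA)).1 + hsplit -
      P.real (V ⁻¹' A) * hp1
  · exact div_le_div_of_nonneg_right (measureReal_mono inter_subset_right) hp0.le

lemma qLo_le_cond_real_preimage (h : CDep P X V c) (hV : AEMeasurable V P) (hX : Measurable X)
    (hX01 : ∀ ω, X ω ≤ 1) (hp0 : 0 < px P X 0) {A : Set ℝ} (hA : MeasurableSet A) :
    qLo (px P X 0) c (P.real (V ⁻¹' A)) ≤ P[|{ω | X ω = 0}].real (V ⁻¹' A) := by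
  have := isProbabilityMeasure_cond_of_px_pos hp0
  have hVA : NullMeasurableSet (V ⁻¹' A) P := hV.nullMeasurableSet_preimage hA
  have hle := h.cond_real_preimage_le_qUp hV hX hX01 hp0 hA.compl
  rw [preimage_compl, probReal_compl_eq_one_sub₀ hVA,
    probReal_compl_eq_one_sub₀ (hVA.mono_ac cond_absolutelyContinuous)] at hle
  rw [qLo_eq_one_sub_qUp]
  exact sub_le_comm.1 hle

lemma quant_le_Qgen_qUp (h : CDep P X V c) (hV : AEMeasurable V P) (hX : Measurable X)
    (hX01 : ∀ ω, X ω ≤ 1) (hp0 : 0 < px P X 0) {lo hi : EReal} {τ : ℝ}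
    (hτ : τ ∈ Ioo (0 : ℝ) 1) (hhi : (quant P V τ : EReal) ≤ hi) :
    (quant P V τ : EReal) ≤ Qgen (condCDF' P X V 0) lo hi (qUp (px P X 0) c τ) := by
  have hpos := qUp_pos hp0 (h.nonneg hV) hτ
  rcases (qUp_le_one (p := px P X 0) (c := c) (τ := τ)).eq_or_lt with hone | hlt
  · simpa [Qgen, hone, zero_lt_one.not_ge] using hhi
  have := isProbabilityMeasure_cond_of_px_pos hp0
  rw [Qgen_condCDF' hX ⟨hpos, hlt⟩, EReal.coe_le_coe_iff, quant_le_iff hV hτ]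
  set y := quant P[|{ω | X ω = 0}] V (qUp (px P X 0) c τ)
  have hy : qUp (px P X 0) c τ ≤ qUp (px P X 0) c (P.real {ω | V ω ≤ y}) :=
    ((quant_le_iff (hV.mono_ac cond_absolutelyContinuous) ⟨hpos, hlt⟩).1 le_rfl).trans
      (h.cond_real_preimage_le_qUp hV hX hX01 hp0 measurableSet_Iic)
  by_contra! hFy
  exact hy.not_gt (qUp_lt_qUp hp0 measureReal_le_one (h.nonneg hV) hFy hτ.2.le hlt)

lemma Qgen_qLo_le_quant (h : CDep P X V c) (hV : AEMeasurable V P) (hX : Measurable X)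
    (hX01 : ∀ ω, X ω ≤ 1) (hp0 : 0 < px P X 0) {lo hi : EReal} {τ : ℝ}
    (hτ : τ ∈ Ioo (0 : ℝ) 1) (hlo : lo ≤ (quant P V τ : EReal)) :
    Qgen (condCDF' P X V 0) lo hi (qLo (px P X 0) c τ) ≤ quant P V τ := by
  have hlt : qLo (px P X 0) c τ < 1 := by
    rw [qLo_eq_one_sub_qUp, sub_lt_self_iff]
    exact qUp_pos hp0 (h.nonneg hV) ⟨sub_pos.2 hτ.2, sub_lt_self 1 hτ.1⟩
  rcases le_or_gt (qLo (px P X 0) c τ) 0 with hzero | hpos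
  · simpa [Qgen, hzero] using hlo
  have := isProbabilityMeasure_cond_of_px_pos hp0
  rw [Qgen_condCDF' hX ⟨hpos, hlt⟩, EReal.coe_le_coe_iff,
    quant_le_iff (hV.mono_ac cond_absolutelyContinuous) ⟨hpos, hlt⟩]
  calc qLo (px P X 0) c τ
      ≤ qLo (px P X 0) c (P.real {ω | V ω ≤ quant P V τ}) :=
        monotoneOn_qLo hp0 measureReal_le_one (h.nonneg hV) hτ.1.le measureReal_nonneg
          ((quant_le_iff hV hτ).1 le_rfl)
    _ ≤ P[|{ω | X ω = 0}].real {ω | V ω ≤ quant P V τ} :=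
        h.qLo_le_cond_real_preimage hV hX hX01 hp0 measurableSet_Iic

lemma eint01_Qgen_le_integral_le (h : CDep P X V c) (hV : Integrable V P) (hX : Measurable X)
    (hX01 : ∀ ω, X ω ≤ 1) (hp0 : 0 < px P X 0) {lo hi : EReal}
    (hsupp : ∀ᵐ ω ∂P, (V ω : EReal) ∈ Icc lo hi) :
    eint01 (fun τ => Qgen (condCDF' P X V 0) lo hi (qLo (px P X 0) c τ)) ≤
        ((∫ ω, V ω ∂P : ℝ) : EReal) ∧
      ((∫ ω, V ω ∂P : ℝ) : EReal) ≤
        eint01 (fun τ => Qgen (condCDF' P X V 0) lo hi (qUp (px P X 0) c τ)) := by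
  have hquant : ∀ᵐ τ ∂volume.restrict (Ioo (0 : ℝ) 1), (quant P V τ : EReal) ∈ Icc lo hi :=
    (identDistrib_quant hV.aemeasurable).symm.ae_snd
      (measurable_coe_real_ereal measurableSet_Icc) hsupp
  have hunit : ∀ᵐ τ ∂volume.restrict (Ioo (0 : ℝ) 1), τ ∈ Ioo (0 : ℝ) 1 :=
    ae_restrict_mem measurableSet_Ioo
  rw [← eint01_quant hV]
  constructor <;> refine eint01_mono_ae ?_ <;> filter_upwards [hquant, hunit] with τ hmem hτ
  · exact h.Qgen_qLo_le_quant hV.aemeasurable hX hX01 hp0 hτ hmem.1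
  · exact h.quant_le_Qgen_qUp hV.aemeasurable hX hX01 hp0 hτ hmem.2

end CDep

section TreatmentEffect

variable {Ω : Type*} [MeasurableSpace Ω] {P : Measure Ω} {X : Ω → ℕ} {Yv : ℕ → Ω → ℝ} {Y : Ω → ℝ}

lemma integral_treated_sub (hX : Measurable X) (hX01 : ∀ ω, X ω ≤ 1)
    (hY : ∀ ω, Y ω = Yv (X ω) ω) (hint : Integrable (Yv 0) P)
    (hYint : IntegrableOn Y {ω | X ω = 1} P) :
    ∫ ω in {ω | X ω = 1}, (Yv 1 ω - Yv 0 ω) ∂P =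
      ∫ ω in {ω | X ω = 1}, Y ω ∂P - (∫ ω, Yv 0 ω ∂P - ∫ ω in {ω | X ω = 0}, Y ω ∂P) := by
  have hm := measurableSet_setOf_eq hX
  have hYx (x : ℕ) : EqOn Y (Yv x) {ω | X ω = x} := fun ω hω => by rw [hY, hω]
  rw [setIntegral_congr_fun (hm 1) (hYx 1), setIntegral_congr_fun (hm 0) (hYx 0),
    integral_sub (hYint.congr_fun (hYx 1) (hm 1)) hint.integrableOn,
    ← integral_add_compl (hm 1) hint, setOf_eq_zero_eq_compl hX01, add_sub_cancel_right]

end TreatmentEffect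

lemma sub_sub_div_le_sub_sub_div {a q p E F : EReal} (hp : 0 ≤ p) (h : E ≤ F) :
    a - (F - q) / p ≤ a - (E - q) / p :=
  EReal.sub_le_sub le_rfl (EReal.div_le_div_right_of_nonneg hp (EReal.sub_le_sub h le_rfl))

theorem att_bounds_general {Ω : Type*} [MeasurableSpace Ω]
    (P : Measure Ω) [IsProbabilityMeasure P]
    (Yv : ℕ → Ω → ℝ) (X : Ω → ℕ) (Y : Ω → ℝ) (hXm : Measurable X)
    (hX01 : ∀ ω, X ω ≤ 1) (hY : ∀ ω, Y ω = Yv (X ω) ω) (hp1 : px P X 1 ∈ Ioo (0 : ℝ) 1)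
    (lo0 hi0 : EReal) (hsupp : ∀ᵐ ω ∂P, (Yv 0 ω : EReal) ∈ Icc lo0 hi0)
    (c : ℝ) (hdep0 : CDep P X (Yv 0) c)
    (hint : Integrable (Yv 0) P) (hYint : IntegrableOn Y {ω | X ω = 1} P) :
    (((∫ ω in {ω | X ω = 1}, Y ω ∂P) / px P X 1 : ℝ) : EReal) -
        (eint01 (fun τ => Qgen (condCDF' P X Y 0) lo0 hi0 (qUp (px P X 0) c τ)) -
            ((px P X 0 * ((∫ ω in {ω | X ω = 0}, Y ω ∂P) / px P X 0) : ℝ) : EReal)) /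
          ((px P X 1 : ℝ) : EReal) ≤
      (((∫ ω in {ω | X ω = 1}, (Yv 1 ω - Yv 0 ω) ∂P) / px P X 1 : ℝ) : EReal) ∧
    (((∫ ω in {ω | X ω = 1}, (Yv 1 ω - Yv 0 ω) ∂P) / px P X 1 : ℝ) : EReal) ≤
      (((∫ ω in {ω | X ω = 1}, Y ω ∂P) / px P X 1 : ℝ) : EReal) -
        (eint01 (fun τ => Qgen (condCDF' P X Y 0) lo0 hi0 (qLo (px P X 0) c τ)) -
            ((px P X 0 * ((∫ ω in {ω | X ω = 0}, Y ω ∂P) / px P X 0) : ℝ) : EReal)) /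
          ((px P X 1 : ℝ) : EReal) := by
  have hp0 : 0 < px P X 0 := px_zero_eq_one_sub (P := P) hXm hX01 ▸ sub_pos.2 hp1.2
  rw [condCDF'_congr fun ω hω => (hY ω).trans (by rw [hω]), mul_div_cancel₀ _ hp0.ne',
    integral_treated_sub hXm hX01 hY hint hYint, sub_div, EReal.coe_sub, EReal.coe_div (_ - _),
    EReal.coe_sub (∫ ω, Yv 0 ω ∂P)]
  obtain ⟨hlower, hupper⟩ := hdep0.eint01_Qgen_le_integral_le hint hXm hX01 hp0 hsupp
  have hp1' : (0 : EReal) ≤ px P X 1 := EReal.coe_nonneg.2 hp1.1.le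
  exact ⟨sub_sub_div_le_sub_sub_div hp1' hupper, sub_sub_div_le_sub_sub_div hp1' hlower⟩

end

/-- Bounds on the average effect of treatment on the treated under
`c`-dependence of `X` with `Y_0`:
`E(Y∣X=1) - (Ē₀ - p₀ E(Y∣X=0))/p₁ ≤ ATT ≤ E(Y∣X=1) - (E̲₀ - p₀ E(Y∣X=0))/p₁`,
where `E̲₀ = ∫_0^1 Q̲ᶜ₀(τ) dτ` and `Ē₀ = ∫_0^1 Q̄ᶜ₀(τ) dτ` (endpoints possibly
`±∞`). -/
theorem att_bounds {Ω : Type*} [MeasurableSpace Ω]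
    (P : Measure Ω) [IsProbabilityMeasure P]
    (Yv : ℕ → Ω → ℝ) (X : Ω → ℕ) (Y : Ω → ℝ)
    (hYm : ∀ x, Measurable (Yv x)) (hXm : Measurable X)
    (hX01 : ∀ ω, X ω ≤ 1)
    (hY : ∀ ω, Y ω = Yv (X ω) ω)
    (hp1 : px P X 1 ∈ Set.Ioo (0:ℝ) 1)
    (lo0 hi0 : EReal) (hlh : lo0 < hi0)
    (hcont : ∀ x' ≤ 1, Continuous (condCDF' P X (Yv 0) x'))
    (hmono : ∀ x' ≤ 1, StrictMonoOn (condCDF' P X (Yv 0) x')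
      {y : ℝ | lo0 ≤ (y : EReal) ∧ (y : EReal) ≤ hi0})
    (hsupp : ∀ x' ≤ 1, ∀ y : ℝ,
      ((y : EReal) ≤ lo0 → condCDF' P X (Yv 0) x' y = 0) ∧
      (hi0 ≤ (y : EReal) → condCDF' P X (Yv 0) x' y = 1))
    (c : ℝ) (hc : c ∈ Set.Icc (0:ℝ) 1)
    (hdep0 : CDep P X (Yv 0) c)
    (hint : ∀ x ≤ 1, Integrable (Yv x) P)
    (hcondint : ∀ x ≤ 1, IntegrableOn Y {ω | X ω = x} P) :
    (((∫ ω in {ω | X ω = 1}, Y ω ∂P) / px P X 1 : ℝ) : EReal) -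
        (eint01 (fun τ => Qgen (condCDF' P X Y 0) lo0 hi0 (qUp (px P X 0) c τ)) -
            ((px P X 0 * ((∫ ω in {ω | X ω = 0}, Y ω ∂P) / px P X 0) : ℝ) : EReal)) /
          ((px P X 1 : ℝ) : EReal) ≤
      (((∫ ω in {ω | X ω = 1}, (Yv 1 ω - Yv 0 ω) ∂P) / px P X 1 : ℝ) : EReal) ∧
    (((∫ ω in {ω | X ω = 1}, (Yv 1 ω - Yv 0 ω) ∂P) / px P X 1 : ℝ) : EReal) ≤
      (((∫ ω in {ω | X ω = 1}, Y ω ∂P) / px P X 1 : ℝ) : EReal) -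
        (eint01 (fun τ => Qgen (condCDF' P X Y 0) lo0 hi0 (qLo (px P X 0) c τ)) -
            ((px P X 0 * ((∫ ω in {ω | X ω = 0}, Y ω ∂P) / px P X 0) : ℝ) : EReal)) /
          ((px P X 1 : ℝ) : EReal) := by
  exact att_bounds_general P Yv X Y hXm hX01 hY hp1 lo0 hi0
    (ae_mem_Icc_of_condCDF' hXm hX01 (hYm 0).aemeasurable hsupp) c hdep0 (hint 0 zero_le_one)
    (hcondint 1 le_rfl)
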